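/- Let k be a positive integer, let O be a bounded self-adjoint operator on L²(ℝ^{3k}), and let φ ∈ L²(ℝ³) with ‖φ‖ = 1. For N ≥ 2k, let σ_N² := ⟨φ^{⊗N}, (O_N^{(k)})² φ^{⊗N}⟩ − ⟨φ^{⊗N}, O_N^{(k)} φ^{⊗N}⟩² denote the variance of the sum O_N^{(k)} = Σ_{i_k ∈ I_N^{(k)}} O_{i_k} in the factorized state φ^{⊗N}. Then there exists a constant C_k > 0 (depending only on k) such that σ_N² ≤ C_k ‖O‖_op² N^{2k−1} for all N ≥ 2k. -/

import Mathlib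

/-!
Write `Φ = φ^{⊗N}`, `P = φ^{⊗k}`, `e = ⟪P, O P⟫`, and let `O_ι` be the lift of `O` along an embedding
`ι : Fin k ↪ Fin N`. Along `ι` the vector `Φ` factorizes as `P ⊗ φ^{⊗(N-k)}`, so
`v_ι := O_ι Φ = (O P) ⊗ φ^{⊗(N-k)}`, a vector of norm at most `‖O‖`. The adjoint of `O_ι` also maps
`Φ` to `v_ι` (`adjoint_lift_tens`): this is checked against vectors that are products along `ι`,
which are total (`eq_zero_of_inner_tens`). Hence the variance is the sum over pairs `(ι, κ)` of
`re ⟪v_ι, v_κ⟫ - e ^ 2`.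

When `ι` and `κ` have disjoint ranges, `v_κ` is itself a product along `ι` with factor `P`
(`tens_disjoint`), so `⟪v_ι, v_κ⟫ = ⟪O P, P⟫ * ⟪P, O P⟫ = e ^ 2` and the pair contributes nothing.
The other pairs contribute at most `‖O‖ ^ 2` each, and there are at most `k ^ 2 * N ^ (2k - 1)` of
them (`card_meet`).
-/

/- The variance of the sum of lifted k-particle operators in a factorized state is of order
N^{2k-1}. -/

open MeasureTheory
open scoped ComplexInnerProductSpace

noncomputable section

/-- Physical one-particle configuration space `ℝ³`. -/
abbrev R3 : Type := EuclideanSpace ℝ (Fin 3)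

/-- The one-particle Hilbert space `L²(ℝ³)`. -/
abbrev OneH : Type := Lp ℂ 2 (volume : Measure R3)

/-- The `m`-particle Hilbert space `L²(ℝ^{3m})`, realized as `L²((ℝ³)^m)`. -/
abbrev HS (m : ℕ) : Type := Lp ℂ 2 (volume : Measure (Fin m → R3))

/-- `Φ` is the `m`-fold tensor power `φ^{⊗m}`, i.e. a.e. equal to
`(x_1, …, x_m) ↦ ∏_j φ(x_j)`. -/
def IsTensorPow (m : ℕ) (φ : OneH) (Φ : HS m) : Prop :=
  ⇑Φ =ᵐ[volume] fun x : Fin m → R3 => ∏ j, φ (x j)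

/-- `T` is the lift `O_{i_k}` of the `k`-particle operator `O` to the `N`-particle space,
acting as `O` in the variables `x_{ι 0}, …, x_{ι (k-1)}` and as the identity elsewhere. -/
def IsLift (k N : ℕ) (O : HS k →L[ℂ] HS k) (ι : Fin k → Fin N)
    (T : HS N →L[ℂ] HS N) : Prop :=
  ∀ (f : HS k) (g : (Fin N → R3) → ℂ) (F G : HS N),
    (∀ x y : Fin N → R3, (∀ j, j ∉ Set.range ι → x j = y j) → g x = g y) →
    (⇑F =ᵐ[volume] fun x => f (x ∘ ι) * g x) →
    (⇑G =ᵐ[volume] fun x => (O f) (x ∘ ι) * g x) →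
    T F = G


/-! ### Splitting the variables along an embedding of index sets -/

section Splitting

/-- The Hilbert space `L²((ℝ³)^α)` with particles labelled by a finite type `α`. It is `HS m` when
`α = Fin m`; general labels are needed because the particles outside an embedding `ι` form a
subtype. -/
abbrev LL (α : Type) [Fintype α] : Type := Lp ℂ 2 (volume : Measure (α → R3))

variable {α β : Type}

/-- The labels outside the range of `ι`. -/
def Rest (ι : α ↪ β) : Type := {j : β // j ∉ Set.range ι}

instance [Fintype β] (ι : α ↪ β) : Fintype (Rest ι) :=
  @Fintype.ofFinite _ (inferInstanceAs (Finite {j : β // j ∉ Set.range ι}))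

/-- The inclusion of the remaining labels. -/
def Rest.emb (ι : α ↪ β) : Rest ι ↪ β := ⟨Subtype.val, Subtype.val_injective⟩

lemma Rest.emb_notMem (ι : α ↪ β) (c : Rest ι) : Rest.emb ι c ∉ Set.range ι := c.2

/-- Every label is either in the range of `ι` or one of the remaining labels. -/
def splitIdx (ι : α ↪ β) : α ⊕ Rest ι ≃ β :=
  Equiv.ofBijective (Sum.elim ι (Rest.emb ι)) <| by
    constructor
    · rintro (a | c) (a' | c') h
      · simpa using h
      · exact absurd ⟨a, h⟩ (Rest.emb_notMem ι c')
      · exact absurd ⟨a', h.symm⟩ (Rest.emb_notMem ι c)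
      · simpa using h
    · intro j
      by_cases h : j ∈ Set.range ι
      · obtain ⟨a, rfl⟩ := h
        exact ⟨.inl a, rfl⟩
      · exact ⟨.inr ⟨j, h⟩, rfl⟩

@[simp] lemma splitIdx_inl (ι : α ↪ β) (a : α) : splitIdx ι (.inl a) = ι a := rfl
@[simp] lemma splitIdx_inr (ι : α ↪ β) (c : Rest ι) : splitIdx ι (.inr c) = Rest.emb ι c := rfl

/-- The change of variables `x ↦ (x ∘ ι, x restricted to the remaining labels)`. -/
def splitVars (ι : α ↪ β) : (β → R3) ≃ᵐ (α → R3) × (Rest ι → R3) :=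
  (MeasurableEquiv.arrowCongr' (splitIdx ι).symm (MeasurableEquiv.refl R3)).trans
    (MeasurableEquiv.sumPiEquivProdPi fun _ => R3)

lemma splitVars_apply (ι : α ↪ β) (x : β → R3) :
    splitVars ι x = (x ∘ ι, x ∘ Rest.emb ι) := rfl

variable [Fintype α] [Fintype β]

lemma splitVars_mp (ι : α ↪ β) : MeasurePreserving (splitVars ι) volume volume :=
  (volume_preserving_arrowCongr' _ _ (MeasurePreserving.id _)).trans
    (volume_measurePreserving_sumPiEquivProdPi fun _ => R3)

lemma qmp_fst (ι : α ↪ β) : Measure.QuasiMeasurePreserving (fun x : β → R3 => x ∘ ι) :=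
  (Measure.quasiMeasurePreserving_fst (μ := (volume : Measure (α → R3)))
    (ν := (volume : Measure (Rest ι → R3)))).comp (splitVars_mp ι).quasiMeasurePreserving

lemma qmp_snd (ι : α ↪ β) : Measure.QuasiMeasurePreserving (fun x : β → R3 => x ∘ Rest.emb ι) :=
  (Measure.quasiMeasurePreserving_snd (μ := (volume : Measure (α → R3)))
    (ν := (volume : Measure (Rest ι → R3)))).comp (splitVars_mp ι).quasiMeasurePreserving

lemma integral_split (ι : α ↪ β) (F : (α → R3) → ℂ) (H : (Rest ι → R3) → ℂ) :
    ∫ x : β → R3, F (x ∘ ι) * H (x ∘ Rest.emb ι) = (∫ y, F y) * ∫ z, H z := by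
  rw [← integral_prod_mul]
  exact (splitVars_mp ι).integral_comp' (g := fun p => F p.1 * H p.2)

lemma prod_split (ι : α ↪ β) (h : β → ℂ) :
    ∏ j, h j = (∏ a, h (ι a)) * ∏ c, h (Rest.emb ι c) := by
  rw [← (splitIdx ι).prod_comp, Fintype.prod_sum_type]
  rfl

lemma memLp_split (ι : α ↪ β) (u : LL α) (w : LL (Rest ι)) :
    MemLp (fun x : β → R3 => u (x ∘ ι) * w (x ∘ Rest.emb ι)) 2 volume := by
  have hu := (Lp.aestronglyMeasurable u).comp_quasiMeasurePreserving (qmp_fst ι)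
  have hw := (Lp.aestronglyMeasurable w).comp_quasiMeasurePreserving (qmp_snd ι)
  refine (memLp_two_iff_integrable_sq_norm (hu.mul hw)).2 ?_
  have := ((memLp_two_iff_integrable_sq_norm (Lp.aestronglyMeasurable u)).1 (Lp.memLp u)).mul_prod
    ((memLp_two_iff_integrable_sq_norm (Lp.aestronglyMeasurable w)).1 (Lp.memLp w))
  refine ((splitVars_mp ι).integrable_comp_of_integrable this).congr (.of_forall fun x => ?_)
  simp [splitVars_apply, mul_pow]

/-! ### Product vectors -/

/-- The vector `u ⊗ w` of `L²((ℝ³)^β)`, with `u` in the variables `x_{ι a}` and `w` in the remaining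
ones. -/
def tens (ι : α ↪ β) (u : LL α) (w : LL (Rest ι)) : LL β := (memLp_split ι u w).toLp _

lemma coe_tens (ι : α ↪ β) (u : LL α) (w : LL (Rest ι)) :
    tens ι u w =ᵐ[volume] fun x : β → R3 => u (x ∘ ι) * w (x ∘ Rest.emb ι) :=
  (memLp_split ι u w).coeFn_toLp

lemma inner_tens (ι : α ↪ β) (u u' : LL α) (w w' : LL (Rest ι)) :
    ⟪tens ι u w, tens ι u' w'⟫ = ⟪u, u'⟫ * ⟪w, w'⟫ := by
  simp only [L2.inner_def]
  rw [← integral_split]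
  refine integral_congr_ae ?_
  filter_upwards [coe_tens ι u w, coe_tens ι u' w'] with x h h'
  rw [h, h']
  simp only [RCLike.inner_apply, map_mul]
  ring

lemma memLp_pow (α : Type) [Fintype α] (φ : OneH) :
    MemLp (fun x : α → R3 => ∏ a, φ (x a)) 2 volume := by
  have hm : AEStronglyMeasurable (fun x : α → R3 => ∏ a, φ (x a)) volume := by
    refine (Finset.stronglyMeasurable_fun_prod _ fun a _ => ?_).aestronglyMeasurable
    exact (Lp.stronglyMeasurable φ).comp_measurable (measurable_pi_apply a)
  rw [memLp_two_iff_integrable_sq_norm hm]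
  have h := (memLp_two_iff_integrable_sq_norm (Lp.aestronglyMeasurable φ)).1 (Lp.memLp φ)
  have := Integrable.fintype_prod (ι := α) (f := fun _ y => ‖φ y‖ ^ 2) (fun _ => h)
  refine this.congr (.of_forall fun x => ?_)
  simp [Finset.prod_pow]

/-- The tensor power `φ^{⊗α}`, as an element of `L²((ℝ³)^α)`. -/
def tpow (α : Type) [Fintype α] (φ : OneH) : LL α := (memLp_pow α φ).toLp _

lemma coe_tpow (α : Type) [Fintype α] (φ : OneH) :
    tpow α φ =ᵐ[volume] fun x : α → R3 => ∏ a, φ (x a) := (memLp_pow α φ).coeFn_toLp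

lemma inner_tpow (α : Type) [Fintype α] (φ : OneH) (hφ : ‖φ‖ = 1) :
    ⟪tpow α φ, tpow α φ⟫ = 1 := by
  have h1 : ⟪φ, φ⟫ = 1 := by simp [inner_self_eq_norm_sq_to_K, hφ]
  rw [L2.inner_def] at h1 ⊢
  have := integral_fintype_prod_volume_eq_pow (ι := α) (fun y => ⟪φ y, φ y⟫)
  rw [h1, one_pow] at this
  rw [← this]
  refine integral_congr_ae ?_
  filter_upwards [coe_tpow α φ] with x h
  rw [h]
  simp [Finset.prod_pow]

lemma tpow_split (ι : α ↪ β) (φ : OneH) :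
    tpow β φ = tens ι (tpow α φ) (tpow (Rest ι) φ) := by
  refine Lp.ext ?_
  filter_upwards [coe_tpow β φ, coe_tens ι (tpow α φ) (tpow (Rest ι) φ),
    (qmp_fst ι).ae (coe_tpow α φ), (qmp_snd ι).ae (coe_tpow (Rest ι) φ)] with x h1 h2 h3 h4
  rw [h1, h2, h3, h4]
  exact prod_split ι _

/-- An embedding whose range is disjoint from that of `ι`, seen as an embedding into the labels
outside `ι`. -/
def corestrict {γ : Type} (ι : α ↪ β) (κ : γ ↪ β) (h : Disjoint (Set.range ι) (Set.range κ)) :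
    γ ↪ Rest ι :=
  ⟨fun a => ⟨κ a, fun hm => Set.disjoint_left.1 h hm ⟨a, rfl⟩⟩,
    fun _ _ hab => κ.injective (congrArg (Rest.emb ι) hab)⟩

open Classical in
lemma prod_rest (ι : α ↪ β) (h : β → ℂ) :
    ∏ c, h (Rest.emb ι c) = ∏ j, if j ∈ Set.range ι then 1 else h j := by
  rw [prod_split ι]
  simp only [Rest.emb_notMem, Set.mem_range_self, if_true, if_false, Finset.prod_const_one, one_mul]

/-- If `ι` and `κ` have disjoint ranges, the vector with `u` in the `κ`-variables and `φ` in all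
others also factorizes along `ι`, with the factor `φ^{⊗α}` there. -/
lemma tens_disjoint {γ : Type} [Fintype γ] (ι : α ↪ β) (κ : γ ↪ β)
    (h : Disjoint (Set.range ι) (Set.range κ)) (u : LL γ) (φ : OneH) :
    tens κ u (tpow (Rest κ) φ) =
      tens ι (tpow α φ) (tens (corestrict ι κ h) u (tpow (Rest (corestrict ι κ h)) φ)) := by
  classical
  set κ' := corestrict ι κ h with hκ'
  have hk : ∀ a, Rest.emb ι (κ' a) = κ a := fun a => rfl
  refine Lp.ext ?_
  filter_upwards [coe_tens κ u (tpow (Rest κ) φ), coe_tens ι (tpow α φ)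
    (tens κ' u (tpow (Rest κ') φ)), (qmp_snd κ).ae (coe_tpow (Rest κ) φ),
    (qmp_fst ι).ae (coe_tpow α φ), (qmp_snd ι).ae (coe_tens κ' u (tpow (Rest κ') φ)),
    (qmp_snd ι).ae ((qmp_snd κ').ae (coe_tpow (Rest κ') φ))] with x h1 h2 h3 h4 h5 h6
  rw [h1, h2, h3, h4, h5, h6]
  have e1 : (x ∘ Rest.emb ι) ∘ κ' = x ∘ κ := rfl
  rw [e1]
  have e2 : ∏ c, φ ((x ∘ Rest.emb κ) c) =
      (∏ a, φ (x (ι a))) * ∏ c, φ (((x ∘ Rest.emb ι) ∘ Rest.emb κ') c) := by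
    simp only [Function.comp_apply]
    rw [prod_rest κ fun j => φ (x j), prod_rest κ' fun j => φ (x (Rest.emb ι j)), prod_split ι]
    congr 1
    · refine Finset.prod_congr rfl fun a _ => if_neg fun hm => Set.disjoint_left.1 h ⟨a, rfl⟩ hm
    · refine Finset.prod_congr rfl fun c _ => ?_
      congr 1
      refine propext ⟨?_, ?_⟩
      · rintro ⟨a, ha⟩
        exact ⟨a, (Rest.emb ι).injective ha⟩
      · rintro ⟨a, rfl⟩
        exact ⟨a, rfl⟩
  rw [e2]
  simp only [Function.comp_apply]
  ring

/-- The product vectors along `ι` span a dense subspace: a vector orthogonal to all of them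
integrates to zero over all boxes, hence over all measurable subsets of large cubes. -/
lemma eq_zero_of_inner_tens (ι : α ↪ β) (h : LL β) (hh : ∀ u w, ⟪tens ι u w, h⟫ = 0) : h = 0 := by
  classical
  have hbox : ∀ s : β → Set R3, (∀ j, MeasurableSet (s j)) → (∀ j, volume (s j) ≠ ⊤) →
      ∫ x in Set.univ.pi s, h x = 0 := by
    intro s hs hfin
    have hvol : ∀ {δ : Type} [Fintype δ] (t : δ → Set R3), (∀ j, volume (t j) ≠ ⊤) →
        volume (Set.univ.pi t) ≠ ⊤ := by
      intro δ _ t ht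
      rw [volume_pi_pi]
      exact ENNReal.prod_ne_top fun j _ => ht j
    have hms := MeasurableSet.univ_pi hs
    have hm1 : MeasurableSet (Set.univ.pi (s ∘ ι)) := MeasurableSet.univ_pi fun a => hs _
    have hm2 : MeasurableSet (Set.univ.pi (s ∘ Rest.emb ι)) := MeasurableSet.univ_pi fun a => hs _
    have hv := hvol s hfin
    have hv1 := hvol (s ∘ ι) fun a => hfin _
    have hv2 := hvol (s ∘ Rest.emb ι) fun a => hfin _
    -- The indicator of a box is a product vector.
    rw [← L2.inner_indicatorConstLp_one (𝕜 := ℂ) hms hv h, ← hh (indicatorConstLp 2 hm1 hv1 1)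
      (indicatorConstLp 2 hm2 hv2 1)]
    congr 1
    refine Lp.ext ?_
    filter_upwards [coe_tens ι (indicatorConstLp 2 hm1 hv1 1) (indicatorConstLp 2 hm2 hv2 1),
      (indicatorConstLp_coeFn (hs := hms) (hμs := hv) (p := 2) (c := (1 : ℂ))),
      (qmp_fst ι).ae (indicatorConstLp_coeFn (hs := hm1) (hμs := hv1) (p := 2) (c := (1 : ℂ))),
      (qmp_snd ι).ae (indicatorConstLp_coeFn (hs := hm2) (hμs := hv2) (p := 2) (c := (1 : ℂ)))]
      with x h1 h2 h3 h4
    rw [h1, h2, h3, h4]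
    have key : x ∈ Set.univ.pi s ↔
        x ∘ ι ∈ Set.univ.pi (s ∘ ι) ∧ x ∘ Rest.emb ι ∈ Set.univ.pi (s ∘ Rest.emb ι) := by
      simp only [Set.mem_univ_pi, Function.comp_apply]
      rw [← (splitIdx ι).forall_congr_right, Sum.forall]
      rfl
    simp only [Set.indicator_apply, key]
    split_ifs <;> simp_all
  let B : ℕ → Set (β → R3) := fun n => Set.univ.pi fun _ => Metric.ball 0 n
  have hBm : ∀ n, MeasurableSet (B n) := fun n => MeasurableSet.univ_pi fun _ => measurableSet_ball
  have hBfin : ∀ n, volume (B n) ≠ ⊤ := by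
    intro n
    rw [volume_pi_pi]
    exact ENNReal.prod_ne_top fun j _ => measure_ball_lt_top.ne
  have hint : ∀ n, IntegrableOn h (B n) := fun n =>
    integrableOn_Lp_of_measure_ne_top h (by norm_num) (hBfin n)
  have hall : ∀ n (A : Set (β → R3)), MeasurableSet A →
      ∫ x in A, h x ∂(volume.restrict (B n)) = 0 := by
    intro n A hA
    -- `π`-`λ` induction: measurable boxes generate the product σ-algebra.
    refine MeasurableSpace.induction_on_inter
      (C := fun A _ => ∫ x in A, h x ∂(volume.restrict (B n)) = 0)
      generateFrom_pi.symm isPiSystem_pi ?_ ?_ ?_ ?_ A hA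
    · simp
    · rintro t ⟨s, hs, rfl⟩
      replace hs : ∀ j, MeasurableSet (s j) := fun j => hs j trivial
      rw [Measure.restrict_restrict (MeasurableSet.univ_pi hs), ← Set.pi_inter_distrib]
      exact hbox _ (fun j => (hs j).inter measurableSet_ball) fun j =>
        measure_ne_top_of_subset Set.inter_subset_right measure_ball_lt_top.ne
    · intro t ht ih
      have h0 : ∫ x in B n, h x = 0 := hbox _ (fun _ => measurableSet_ball) fun _ =>
        measure_ball_lt_top.ne
      have := integral_add_compl ht (hint n)
      rwa [ih, zero_add, h0] at this
    · intro f hd hm ih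
      rw [integral_iUnion hm hd (hint n).integrableOn]
      simp [ih]
  have hae : ∀ n, ∀ᵐ x, x ∈ B n → h x = 0 := by
    intro n
    rw [← ae_restrict_iff' (hBm n)]
    exact (hint n).ae_eq_zero_of_forall_setIntegral_eq_zero fun A hA _ => hall n A hA
  refine Lp.ext ?_
  filter_upwards [ae_all_iff.2 hae, Lp.coeFn_zero ℂ 2 (volume : Measure (β → R3))] with x hx h0
  rw [h0]
  obtain ⟨n, hn⟩ := exists_nat_gt (‖x‖)
  refine hx n fun j _ => ?_
  rw [mem_ball_zero_iff]
  exact (norm_le_pi_norm x j).trans_lt hn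

end Splitting

/-! ### Lifted operators on product vectors -/

lemma lift_tens {k N : ℕ} {O : HS k →L[ℂ] HS k} {ι : Fin k ↪ Fin N} {T : HS N →L[ℂ] HS N}
    (hT : IsLift k N O ι T) (f : HS k) (w : LL (Rest ι)) : T (tens ι f w) = tens ι (O f) w := by
  refine hT f (fun x => w (x ∘ Rest.emb ι)) _ _ (fun x y h => ?_) (coe_tens ι f w)
    (coe_tens ι (O f) w)
  have : x ∘ Rest.emb ι = y ∘ Rest.emb ι := funext fun c => h _ (Rest.emb_notMem ι c)
  simp only [this]

/-- The lift of a self-adjoint operator is self-adjoint, at least on product vectors. Pairing with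
product vectors determines the left-hand side, by `eq_zero_of_inner_tens`. -/
lemma adjoint_lift_tens {k N : ℕ} {O : HS k →L[ℂ] HS k} (hO : IsSelfAdjoint O)
    {ι : Fin k ↪ Fin N} {T : HS N →L[ℂ] HS N}
    (hT : IsLift k N O ι T) (f : HS k) (w : LL (Rest ι)) :
    (ContinuousLinearMap.adjoint T) (tens ι f w) = tens ι (O f) w := by
  rw [← sub_eq_zero]
  refine eq_zero_of_inner_tens ι _ fun u w' => ?_
  have hs : ⟪O u, f⟫ = ⟪u, O f⟫ := by
    rw [← ContinuousLinearMap.adjoint_inner_right, ContinuousLinearMap.isSelfAdjoint_iff'.1 hO]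
  rw [inner_sub_right, ContinuousLinearMap.adjoint_inner_right, lift_tens hT, inner_tens,
    inner_tens, hs, sub_self]

/-! ### Counting overlapping pairs -/

open Classical in
/-- If `p.1 a = p.2 b`, the value of `p.2` at `b` is determined by `p.1`, leaving `2k - 1` free
values; there are `k²` choices of `(a, b)`. -/
lemma card_meet (k N : ℕ) :
    (Finset.univ.filter fun p : (Fin k ↪ Fin N) × (Fin k ↪ Fin N) =>
      ¬ Disjoint (Set.range p.1) (Set.range p.2)).card ≤ k ^ 2 * N ^ (2 * k - 1) := by
  have hfib : ∀ a b : Fin k, (Finset.univ.filter fun p : (Fin k ↪ Fin N) × (Fin k ↪ Fin N) =>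
      p.1 a = p.2 b).card ≤ N ^ (2 * k - 1) := by
    intro a b
    have hk : 1 ≤ k := Nat.one_le_of_lt a.2
    have hc : Fintype.card ((Fin k → Fin N) × ({c : Fin k // c ≠ b} → Fin N)) =
        N ^ (2 * k - 1) := by
      rw [Fintype.card_prod, Fintype.card_fun, Fintype.card_fun, Fintype.card_fin, Fintype.card_fin,
        Fintype.card_subtype_compl, Fintype.card_fin, Fintype.card_unique, ← pow_add]
      congr 1
      omega
    rw [← hc, ← Finset.card_univ]
    refine Finset.card_le_card_of_injOn (fun p => (⇑p.1, fun c => p.2 c)) (by simp) ?_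
    rintro ⟨p, q⟩ hp ⟨p', q'⟩ hp' heq
    simp only [Finset.coe_filter, Finset.mem_univ, true_and, Set.mem_ofPred_eq] at hp hp'
    obtain ⟨h1, h2⟩ := Prod.mk.inj heq
    have h1' : p = p' := DFunLike.coe_injective h1
    subst h1'
    refine Prod.ext rfl (DFunLike.ext _ _ fun c => ?_)
    by_cases hcb : c = b
    · subst hcb
      exact hp.symm.trans hp'
    · exact congrFun h2 ⟨c, hcb⟩
  have hsub : (Finset.univ.filter fun p : (Fin k ↪ Fin N) × (Fin k ↪ Fin N) =>
      ¬ Disjoint (Set.range p.1) (Set.range p.2)) ⊆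
      (Finset.univ : Finset (Fin k × Fin k)).biUnion fun ab =>
        Finset.univ.filter fun p : (Fin k ↪ Fin N) × (Fin k ↪ Fin N) => p.1 ab.1 = p.2 ab.2 := by
    rintro ⟨p, q⟩ h
    obtain ⟨_, ⟨a, rfl⟩, ⟨b, hb⟩⟩ := Set.not_disjoint_iff.1 (Finset.mem_filter.1 h).2
    simp only [Finset.mem_biUnion, Finset.mem_filter, Finset.mem_univ, true_and]
    exact ⟨(a, b), hb.symm⟩
  refine (Finset.card_le_card hsub).trans (Finset.card_biUnion_le.trans ?_)
  refine (Finset.sum_le_sum fun ab _ => hfib ab.1 ab.2).trans ?_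
  simp [sq]

/-- **Variance bound in a factorized state.**  There is a constant `C_k > 0`, depending only
on `k`, such that the variance
`σ_N² = ⟨φ^{⊗N}, (O_N^{(k)})² φ^{⊗N}⟩ − ⟨φ^{⊗N}, O_N^{(k)} φ^{⊗N}⟩²` of the sum
`O_N^{(k)} = ∑_{i_k ∈ I_N^{(k)}} O_{i_k}` in the factorized state `φ^{⊗N}` satisfies
`σ_N² ≤ C_k ‖O‖_op² N^{2k−1}` for all `N ≥ 2k`. -/
theorem variance_order_bound (k : ℕ) (hk : 0 < k) :
    ∃ C : ℝ, 0 < C ∧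
      ∀ (O : HS k →L[ℂ] HS k), IsSelfAdjoint O →
      ∀ (φ : OneH), ‖φ‖ = 1 →
      ∀ (N : ℕ), 2 * k ≤ N →
      ∀ (ΦN : HS N), IsTensorPow N φ ΦN →
      ∀ (Olift : (Fin k ↪ Fin N) → (HS N →L[ℂ] HS N)),
        (∀ ι : Fin k ↪ Fin N, IsLift k N O (⇑ι) (Olift ι)) →
      ∀ (T : HS N →L[ℂ] HS N), T = ∑ ι : Fin k ↪ Fin N, Olift ι →
        (⟪ΦN, (T * T) ΦN⟫).re - ((⟪ΦN, T ΦN⟫).re) ^ 2 ≤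
          C * ‖O‖ ^ 2 * (N : ℝ) ^ (2 * k - 1) := by
  refine ⟨(k : ℝ) ^ 2, by positivity, ?_⟩
  rintro O hO φ hφ N - ΦN hΦN Olift hlift T rfl
  classical
  have hΦ : ΦN = tpow (Fin N) φ := Lp.ext (hΦN.trans (coe_tpow (Fin N) φ).symm)
  set P : HS k := tpow (Fin k) φ with hP
  have hPP : ⟪P, P⟫ = 1 := inner_tpow _ φ hφ
  let v : (Fin k ↪ Fin N) → HS N := fun ι => tens ι (O P) (tpow (Rest ι) φ)
  have hv : ∀ ι, Olift ι ΦN = v ι := fun ι => by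
    rw [hΦ, tpow_split ι, lift_tens (hlift ι)]
  have hv' : ∀ ι, (ContinuousLinearMap.adjoint (Olift ι)) ΦN = v ι := fun ι => by
    rw [hΦ, tpow_split ι, adjoint_lift_tens hO (hlift ι)]
  set e : ℂ := ⟪P, O P⟫ with he
  have he' : ⟪O P, P⟫ = e := by
    rw [← ContinuousLinearMap.adjoint_inner_right, ContinuousLinearMap.isSelfAdjoint_iff'.1 hO]
  have hmean : ∀ ι, ⟪ΦN, v ι⟫ = e := fun ι => by
    rw [hΦ, tpow_split ι, inner_tens, inner_tpow _ φ hφ, mul_one]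
  have hdisj : ∀ ι κ : Fin k ↪ Fin N, Disjoint (Set.range ι) (Set.range κ) →
      ⟪v ι, v κ⟫ = e * e := fun ι κ h => by
    simp only [v]
    rw [tens_disjoint ι κ h, inner_tens, he', tpow_split (corestrict ι κ h), inner_tens,
      inner_tpow _ φ hφ, mul_one]
  -- Self-adjointness makes the mean value `e` real, so that `e * e` has real part `e.re ^ 2`.
  have heim : e.im = 0 := by
    rw [← Complex.conj_eq_iff_im, ← he', inner_conj_symm, he', he]
  have hPn : ‖P‖ = 1 := by
    have h1 := hPP
    rw [inner_self_eq_norm_sq_to_K] at h1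
    have h2 : ‖P‖ ^ 2 = 1 := Complex.ofReal_injective (by simpa using h1)
    exact (pow_eq_one_iff_of_nonneg (norm_nonneg P) two_ne_zero).1 h2
  have hvn : ∀ ι, ‖v ι‖ ≤ ‖O‖ := fun ι => by
    have h1 : ⟪v ι, v ι⟫ = ⟪O P, O P⟫ := by
      simp only [v]
      rw [inner_tens, inner_tpow _ φ hφ, mul_one]
    rw [inner_self_eq_norm_sq_to_K, inner_self_eq_norm_sq_to_K] at h1
    have h2 : ‖v ι‖ ^ 2 = ‖O P‖ ^ 2 := by exact_mod_cast h1
    rw [(pow_left_inj₀ (norm_nonneg _) (norm_nonneg _) two_ne_zero).1 h2]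
    simpa [hPn] using O.le_opNorm P
  have hfst : ⟪ΦN, ((∑ ι, Olift ι) * (∑ ι, Olift ι)) ΦN⟫ = ∑ ι, ∑ κ, ⟪v ι, v κ⟫ := by
    rw [mul_apply_eq_comp, ← ContinuousLinearMap.adjoint_inner_left, map_sum]
    simp only [_root_.sum_apply, hv, hv', sum_inner, inner_sum]
    exact Finset.sum_comm
  have hsnd : ⟪ΦN, (∑ ι, Olift ι) ΦN⟫ = ∑ _ι : Fin k ↪ Fin N, e := by
    simp only [_root_.sum_apply, hv, inner_sum, hmean]
  -- Only pairs with a common index contribute to the variance, each at most `‖O‖ ^ 2`.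
  have hterm : ∀ ι κ : Fin k ↪ Fin N, (⟪v ι, v κ⟫).re - e.re * e.re ≤
      if ¬ Disjoint (Set.range ι) (Set.range κ) then ‖O‖ ^ 2 else 0 := fun ι κ => by
    split_ifs with h
    · rw [hdisj ι κ h, Complex.mul_re, heim]
      simp
    · have h1 : (⟪v ι, v κ⟫).re ≤ ‖v ι‖ * ‖v κ‖ := re_inner_le_norm (𝕜 := ℂ) (v ι) (v κ)
      have h2 : ‖v ι‖ * ‖v κ‖ ≤ ‖O‖ * ‖O‖ :=
        mul_le_mul (hvn ι) (hvn κ) (norm_nonneg _) (norm_nonneg _)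
      nlinarith [mul_self_nonneg e.re]
  rw [hfst, hsnd]
  simp only [Complex.re_sum]
  rw [sq (∑ _ι : Fin k ↪ Fin N, e.re), Finset.sum_mul_sum, ← Finset.sum_sub_distrib]
  simp only [← Finset.sum_sub_distrib]
  calc _ ≤ ∑ ι : Fin k ↪ Fin N, ∑ κ : Fin k ↪ Fin N,
        (if ¬ Disjoint (Set.range ι) (Set.range κ) then ‖O‖ ^ 2 else 0) :=
        Finset.sum_le_sum fun ι _ => Finset.sum_le_sum fun κ _ => hterm ι κ
    _ = ((Finset.univ.filter fun p : (Fin k ↪ Fin N) × (Fin k ↪ Fin N) =>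
          ¬ Disjoint (Set.range p.1) (Set.range p.2)).card : ℝ) * ‖O‖ ^ 2 := by
        rw [← Fintype.sum_prod_type' (f := fun ι κ : Fin k ↪ Fin N =>
          if ¬ Disjoint (Set.range ι) (Set.range κ) then ‖O‖ ^ 2 else 0), ← Finset.sum_filter,
          Finset.sum_const, nsmul_eq_mul]
    _ ≤ ((k : ℝ) ^ 2 * (N : ℝ) ^ (2 * k - 1)) * ‖O‖ ^ 2 :=
        mul_le_mul_of_nonneg_right (by exact_mod_cast card_meet k N) (by positivity)
    _ = _ := by ring

end
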